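/- arXiv:1404.1363 — 5 statements merged into one kernel-verified Lean document; each statement's English description precedes it below -/
import Mathlib

section
/- For each fixed s ∈ (0,1), the function α ↦ q(s,α) is continuous and concave on the interval (0,2s), it satisfies lim_{α→0⁺} q(s,α) = 1/(2s), and lim_{α→2s⁻} q(s,α) = −∞. -/
/-!
Write `N(α, t) = (t^α - 1)(1 - t^{2s-1-α}) = t^α + t^{2s-1-α} - 1 - t^{2s-1}` for the numerator of
the integrand, which is convex in `α` for each `t ∈ (0,1)`; integrating gives concavity of `q`.

For `0 ≤ α ≤ b < 2s`, both factors of `N` are `O(1 - t)` at `t = 1`, and at `t = 0` only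
the second one can blow up. With `c = max 0 (b + 1 - 2s) < 1` the integrand is therefore at
most `2 t^{-c} (1-t)^{1-2s}` in absolute value, an integrable Beta-type integrand (`abs_qInt_le`,
`integrableOn_beta`). Dominated convergence makes the integral continuous on the half-open interval
`[0, 2s)`, which contains both the continuity on `(0, 2s)` and the limit at `0⁺`, since the
integrand vanishes at `α = 0`.

For `α` close to `2s` both factors of `N` are nonpositive, so `N ≥ 0` and dropping the
denominator, which is at most `1`, gives the integrand `≥ N ≥ t^{2s-1-α} - 1 - t^{2s-1}`, whose
integral is `1/(2s-α) - 1 - 1/(2s)`. This forces `q → -∞`.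
-/

open MeasureTheory Filter Set Topology

/-- For `s ∈ (0,1)` and `α ∈ (0,2s)`,
`q(s,α) = 1/(2s) − ∫₀¹ (t^α − 1)(1 − t^{2s−1−α})/(1−t)^{1+2s} dt`. -/
noncomputable def qfun (s α : ℝ) : ℝ :=
  1 / (2 * s) -
    ∫ t in Set.Ioo (0:ℝ) 1, (t ^ α - 1) * (1 - t ^ (2 * s - 1 - α)) / (1 - t) ^ (1 + 2 * s)

/-- The integrand in the definition of `qfun s α`, as a function of `α` and `t`. -/
noncomputable def qInt (s α t : ℝ) : ℝ :=
  (t ^ α - 1) * (1 - t ^ (2 * s - 1 - α)) / (1 - t) ^ (1 + 2 * s)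

lemma integrableOn_beta {c d : ℝ} (hc : c < 1) (hd : d < 1) :
    IntegrableOn (fun t : ℝ => t ^ (-c) * (1 - t) ^ (-d)) (Ioo 0 1) := by
  have h := Complex.betaIntegral_convergent (u := ((1 - c : ℝ) : ℂ)) (v := ((1 - d : ℝ) : ℂ))
    (by simpa using hc) (by simpa using hd)
  rw [intervalIntegrable_iff_integrableOn_Ioo_of_le zero_le_one] at h
  refine IntegrableOn.congr_fun h.norm (fun t ht => ?_) measurableSet_Ioo
  have h1 : (0 : ℝ) < 1 - t := by linarith [ht.2]
  have e : (1 - (t : ℂ)) = ((1 - t : ℝ) : ℂ) := by push_cast; rfl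
  simp only [norm_mul]
  rw [e, Complex.norm_cpow_eq_rpow_re_of_pos ht.1, Complex.norm_cpow_eq_rpow_re_of_pos h1]
  simp

/-- Bound for the factor that does not blow up at `t = 0`. -/
lemma abs_rpow_sub_one_le {t α : ℝ} (ht : t ∈ Ioo (0 : ℝ) 1) (h0 : 0 ≤ α) (h2 : α ≤ 2) :
    |t ^ α - 1| ≤ 2 * (1 - t) := by
  have h1 : t ^ α ≤ 1 := Real.rpow_le_one ht.1.le ht.2.le h0
  have h3 : t ^ (2 : ℝ) ≤ t ^ α := Real.rpow_le_rpow_of_exponent_ge ht.1 ht.2.le h2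
  rw [Real.rpow_two] at h3
  rw [abs_le]
  constructor <;> nlinarith [ht.1, ht.2, sq_nonneg (1 - t)]

/-- Bound for the factor that may blow up at `t = 0`. -/
lemma abs_one_sub_rpow_le {t β c : ℝ} (ht : t ∈ Ioo (0 : ℝ) 1) (hc0 : 0 ≤ c) (hc1 : c ≤ 1)
    (h0 : -c ≤ β) (h2 : β ≤ 1) :
    |1 - t ^ β| ≤ t ^ (-c) * (1 - t) := by
  have h1t : 0 < 1 - t := by linarith [ht.2]
  have hc : 1 ≤ t ^ (-c) :=
    Real.one_le_rpow_of_pos_of_le_one_of_nonpos ht.1 ht.2.le (by linarith)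
  rcases le_total 0 β with h | h
  · have h1 : t ^ β ≤ 1 := Real.rpow_le_one ht.1.le ht.2.le h
    have h3 : t ^ (1 : ℝ) ≤ t ^ β := Real.rpow_le_rpow_of_exponent_ge ht.1 ht.2.le h2
    rw [Real.rpow_one] at h3
    rw [abs_of_nonneg (by linarith)]
    nlinarith
  · have h1 : 1 ≤ t ^ β := Real.one_le_rpow_of_pos_of_le_one_of_nonpos ht.1 ht.2.le h
    have h3 : t ^ (1 : ℝ) ≤ t ^ (-β) :=
      Real.rpow_le_rpow_of_exponent_ge ht.1 ht.2.le (by linarith)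
    have h4 : t ^ β ≤ t ^ (-c) := Real.rpow_le_rpow_of_exponent_ge ht.1 ht.2.le h0
    have h5 : t ^ β * t ^ (-β) = 1 := by rw [← Real.rpow_add ht.1]; simp
    rw [Real.rpow_one] at h3
    rw [abs_of_nonpos (by linarith)]
    have h6 : t ^ β * t ≤ t ^ β * t ^ (-β) := by gcongr
    have h7 : t ^ β * (1 - t) ≤ t ^ (-c) * (1 - t) := by gcongr
    linarith

/-- The integrable majorant, uniform in `α ∈ [0, b]` when `b < 2s`. -/
lemma abs_qInt_le {s α b t : ℝ} (hs : s ∈ Ioo (0 : ℝ) 1) (ht : t ∈ Ioo (0 : ℝ) 1)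
    (h0 : 0 ≤ α) (hb : α ≤ b) (hb2 : b < 2 * s) :
    |qInt s α t| ≤ 2 * (t ^ (-(max 0 (b + 1 - 2 * s))) * (1 - t) ^ (-(2 * s - 1))) := by
  obtain ⟨hs0, hs1⟩ := hs
  have h1t : 0 < 1 - t := by linarith [ht.2]
  set c := max 0 (b + 1 - 2 * s) with hc
  have hc0 : 0 ≤ c := le_max_left _ _
  have hcb : b + 1 - 2 * s ≤ c := le_max_right _ _
  have hc1 : c ≤ 1 := max_le (by norm_num) (by linarith)
  have A := abs_rpow_sub_one_le ht h0 (by linarith)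
  have B := abs_one_sub_rpow_le (β := 2 * s - 1 - α) ht hc0 hc1 (by linarith) (by linarith)
  have D : 0 < (1 - t) ^ (1 + 2 * s) := Real.rpow_pos_of_pos h1t _
  have E : (1 - t) ^ (-(2 * s - 1)) * (1 - t) ^ (1 + 2 * s) = (1 - t) * (1 - t) := by
    rw [← Real.rpow_add h1t, ← sq, ← Real.rpow_two]; congr 1; ring
  rw [qInt, abs_div, abs_mul, abs_of_pos D, div_le_iff₀ D]
  calc _ ≤ 2 * (1 - t) * (t ^ (-c) * (1 - t)) := by gcongr
    _ = 2 * (t ^ (-c) * ((1 - t) * (1 - t))) := by ring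
    _ = _ := by rw [← E]; ring

lemma measurable_qInt (s α : ℝ) : Measurable (qInt s α) := by
  unfold qInt; fun_prop

lemma integrableOn_majorant {s b : ℝ} (hs : s ∈ Ioo (0 : ℝ) 1) (hb2 : b < 2 * s) :
    IntegrableOn (fun t : ℝ =>
      2 * (t ^ (-(max 0 (b + 1 - 2 * s))) * (1 - t) ^ (-(2 * s - 1)))) (Ioo 0 1) :=
  (integrableOn_beta (max_lt one_pos (by linarith)) (by linarith [hs.2])).const_mul 2

lemma integrableOn_qInt {s α : ℝ} (hs : s ∈ Ioo (0 : ℝ) 1) (hα : α ∈ Ico 0 (2 * s)) :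
    IntegrableOn (qInt s α) (Ioo 0 1) := by
  refine Integrable.mono' (integrableOn_majorant hs hα.2)
    (measurable_qInt s α).aestronglyMeasurable ?_
  filter_upwards [ae_restrict_mem measurableSet_Ioo] with t ht
  exact abs_qInt_le hs ht hα.1 le_rfl hα.2

/-- Including the endpoint `α = 0` makes this yield the limit at `0⁺` too. -/
lemma continuousOn_qfun {s : ℝ} (hs : s ∈ Ioo (0 : ℝ) 1) :
    ContinuousOn (qfun s) (Ico 0 (2 * s)) := by
  intro a ha
  refine continuousWithinAt_const.sub ?_
  obtain ⟨b, hab, hb⟩ := exists_between ha.2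
  change ContinuousWithinAt (fun α => ∫ t in Ioo (0 : ℝ) 1, qInt s α t) _ _
  refine MeasureTheory.continuousWithinAt_of_dominated
    (bound := fun t => 2 * (t ^ (-(max 0 (b + 1 - 2 * s))) * (1 - t) ^ (-(2 * s - 1))))
    (Eventually.of_forall fun α => (measurable_qInt s α).aestronglyMeasurable) ?_
    (integrableOn_majorant hs hb) ?_
  · filter_upwards [self_mem_nhdsWithin, mem_nhdsWithin_of_mem_nhds (Iio_mem_nhds hab)]
      with α hα hαb
    filter_upwards [ae_restrict_mem measurableSet_Ioo] with t ht
    exact abs_qInt_le hs ht hα.1 (le_of_lt hαb) hb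
  · filter_upwards [ae_restrict_mem measurableSet_Ioo] with t ht
    have ht0 : t ≠ 0 := ht.1.ne'
    have h1 : Continuous fun α : ℝ => t ^ α := Real.continuous_const_rpow ht0
    have h2 : Continuous fun α : ℝ => t ^ (2 * s - 1 - α) := h1.comp (by fun_prop)
    exact (((h1.sub continuous_const).mul (continuous_const.sub h2)).div_const _).continuousWithinAt

/-- The expanded numerator, which exhibits convexity in `α`. -/
lemma numerator_eq {s α t : ℝ} (ht : 0 < t) :
    (t ^ α - 1) * (1 - t ^ (2 * s - 1 - α)) =
      t ^ α + t ^ (2 * s - 1 - α) - 1 - t ^ (2 * s - 1) := by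
  have : t ^ α * t ^ (2 * s - 1 - α) = t ^ (2 * s - 1) := by
    rw [← Real.rpow_add ht]; congr 1; ring
  linear_combination -this

lemma qInt_convex {s t x y a b : ℝ} (ht : t ∈ Ioo (0 : ℝ) 1) (ha : 0 ≤ a) (hb : 0 ≤ b)
    (hab : a + b = 1) :
    qInt s (a * x + b * y) t ≤ a * qInt s x t + b * qInt s y t := by
  have D : 0 < (1 - t) ^ (1 + 2 * s) := Real.rpow_pos_of_pos (by linarith [ht.2]) _
  have h1 := (convexOn_rpow_left ht.1).2 (mem_univ x) (mem_univ y) ha hb hab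
  have h2 := (convexOn_rpow_left ht.1).2 (mem_univ (2 * s - 1 - x)) (mem_univ (2 * s - 1 - y))
    ha hb hab
  have e : a * (2 * s - 1 - x) + b * (2 * s - 1 - y) = 2 * s - 1 - (a * x + b * y) := by
    linear_combination (2 * s - 1) * hab
  simp only [smul_eq_mul] at h1 h2
  rw [e] at h2
  simp only [qInt, numerator_eq ht.1]
  rw [← mul_div_assoc, ← mul_div_assoc, ← add_div]
  gcongr
  have hk : (a + b) * (1 + t ^ (2 * s - 1)) = 1 + t ^ (2 * s - 1) := by rw [hab, one_mul]
  linarith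

lemma concaveOn_qfun {s : ℝ} (hs : s ∈ Ioo (0 : ℝ) 1) :
    ConcaveOn ℝ (Ioo 0 (2 * s)) (qfun s) := by
  refine ⟨convex_Ioo _ _, fun x hx y hy a b ha hb hab => ?_⟩
  have hz := convex_Ioo 0 (2 * s) hx hy ha hb hab
  have ix := integrableOn_qInt hs (Ioo_subset_Ico_self hx)
  have iy := integrableOn_qInt hs (Ioo_subset_Ico_self hy)
  have iz := integrableOn_qInt hs (Ioo_subset_Ico_self hz)
  have key := setIntegral_mono_on iz ((ix.const_mul a).add (iy.const_mul b)) measurableSet_Ioo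
    (fun t ht => qInt_convex (x := x) (y := y) ht ha hb hab)
  have e : ∫ t in Ioo (0 : ℝ) 1, (a * qInt s x t + b * qInt s y t) =
      a * (∫ t in Ioo (0 : ℝ) 1, qInt s x t) + b * ∫ t in Ioo (0 : ℝ) 1, qInt s y t := by
    rw [integral_add (ix.const_mul a) (iy.const_mul b), integral_const_mul, integral_const_mul]
  have key' := key.trans_eq e
  change a * (1 / (2 * s) - ∫ t in Ioo (0 : ℝ) 1, qInt s x t) +
      b * (1 / (2 * s) - ∫ t in Ioo (0 : ℝ) 1, qInt s y t) ≤
    1 / (2 * s) - ∫ t in Ioo (0 : ℝ) 1, qInt s (a • x + b • y) t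
  have hk : (a + b) * (1 / (2 * s)) = 1 / (2 * s) := by rw [hab, one_mul]
  linarith

lemma integrableOn_rpow_Ioo {r : ℝ} (hr : -1 < r) :
    IntegrableOn (fun t : ℝ => t ^ r) (Ioo 0 1) :=
  (intervalIntegral.integrableOn_Ioo_rpow_iff one_pos).2 hr

lemma integral_rpow_Ioo {r : ℝ} (hr : -1 < r) :
    ∫ t in Ioo (0 : ℝ) 1, t ^ r = 1 / (r + 1) := by
  rw [← integral_Ioc_eq_integral_Ioo, ← intervalIntegral.integral_of_le zero_le_one,
    integral_rpow (Or.inl hr), Real.one_rpow, Real.zero_rpow (by linarith), sub_zero]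

lemma le_qInt {s α t : ℝ} (hs : s ∈ Ioo (0 : ℝ) 1) (ht : t ∈ Ioo (0 : ℝ) 1)
    (h0 : 0 ≤ α) (h1 : 2 * s - 1 ≤ α) :
    t ^ (2 * s - 1 - α) - 1 - t ^ (2 * s - 1) ≤ qInt s α t := by
  have h1t : 0 < 1 - t := by linarith [ht.2]
  have D : 0 < (1 - t) ^ (1 + 2 * s) := Real.rpow_pos_of_pos h1t _
  have D1 : (1 - t) ^ (1 + 2 * s) ≤ 1 :=
    Real.rpow_le_one h1t.le (by linarith [ht.1]) (by linarith [hs.1])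
  have A : t ^ α ≤ 1 := Real.rpow_le_one ht.1.le ht.2.le h0
  have B : 1 ≤ t ^ (2 * s - 1 - α) :=
    Real.one_le_rpow_of_pos_of_le_one_of_nonpos ht.1 ht.2.le (by linarith)
  have P : 0 < t ^ α := Real.rpow_pos_of_pos ht.1 _
  have N : 0 ≤ (t ^ α - 1) * (1 - t ^ (2 * s - 1 - α)) :=
    mul_nonneg_of_nonpos_of_nonpos (by linarith) (by linarith)
  calc _ ≤ (t ^ α - 1) * (1 - t ^ (2 * s - 1 - α)) := by rw [numerator_eq ht.1]; linarith
    _ ≤ qInt s α t := le_div_self N D D1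

lemma qfun_le {s α : ℝ} (hs : s ∈ Ioo (0 : ℝ) 1) (hα : α ∈ Ioo 0 (2 * s))
    (h1 : 2 * s - 1 ≤ α) :
    qfun s α ≤ (1 + 1 / s) - (2 * s - α)⁻¹ := by
  have hs0 := hs.1
  have i1 := integrableOn_rpow_Ioo (r := 2 * s - 1 - α) (by linarith [hα.2])
  have i2 := integrableOn_rpow_Ioo (r := 2 * s - 1) (by linarith)
  have i3 : IntegrableOn (fun _ : ℝ => (1 : ℝ)) (Ioo 0 1) := by simp
  have key := setIntegral_mono_on ((i1.sub i3).sub i2)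
    (integrableOn_qInt hs (Ioo_subset_Ico_self hα)) measurableSet_Ioo
    (fun t ht => le_qInt hs ht hα.1.le h1)
  have e : ∫ t in Ioo (0 : ℝ) 1, (t ^ (2 * s - 1 - α) - 1 - t ^ (2 * s - 1)) =
      1 / (2 * s - 1 - α + 1) - 1 - 1 / (2 * s - 1 + 1) := by
    have i13 : IntegrableOn (fun t : ℝ => t ^ (2 * s - 1 - α) - 1) (Ioo 0 1) := i1.sub i3
    rw [integral_sub i13 i2, integral_sub i1 i3, integral_rpow_Ioo (by linarith [hα.2]),
      integral_rpow_Ioo (by linarith)]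
    simp
  have key' := e.symm.trans_le key
  rw [show 2 * s - 1 - α + 1 = 2 * s - α by ring, show 2 * s - 1 + 1 = 2 * s by ring,
    one_div (2 * s - α)] at key'
  change 1 / (2 * s) - ∫ t in Ioo (0 : ℝ) 1, qInt s α t ≤ _
  have : 1 / s = 1 / (2 * s) + 1 / (2 * s) := by field_simp; norm_num
  linarith

/-- For fixed `s ∈ (0,1)`, the map `α ↦ q(s,α)` is continuous and concave on `(0,2s)`,
tends to `1/(2s)` as `α → 0⁺` and to `−∞` as `α → (2s)⁻`. -/
theorem stmt0 (s : ℝ) (hs : s ∈ Set.Ioo (0:ℝ) 1) :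
    ContinuousOn (qfun s) (Set.Ioo 0 (2 * s)) ∧
    ConcaveOn ℝ (Set.Ioo 0 (2 * s)) (qfun s) ∧
    Tendsto (qfun s) (𝓝[Set.Ioo (0:ℝ) (2 * s)] 0) (𝓝 (1 / (2 * s))) ∧
    Tendsto (qfun s) (𝓝[Set.Ioo (0:ℝ) (2 * s)] (2 * s)) atBot := by
  have hs0 := hs.1
  refine ⟨(continuousOn_qfun hs).mono Ioo_subset_Ico_self, concaveOn_qfun hs, ?_, ?_⟩
  · have h := ((continuousOn_qfun hs) 0 ⟨le_rfl, by linarith⟩).mono Ioo_subset_Ico_self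
    have e : qfun s 0 = 1 / (2 * s) := by simp [qfun]
    rw [← e]
    exact h
  · have h1 : Tendsto (fun α : ℝ => 2 * s - α) (𝓝[Ioo (0:ℝ) (2 * s)] (2 * s)) (𝓝[>] 0) := by
      refine tendsto_nhdsWithin_iff.2 ⟨?_, ?_⟩
      · have : Tendsto (fun α : ℝ => 2 * s - α) (𝓝 (2 * s)) (𝓝 (2 * s - 2 * s)) :=
          (continuous_const.sub continuous_id).tendsto _
        rw [sub_self] at this
        exact this.mono_left nhdsWithin_le_nhds
      · filter_upwards [self_mem_nhdsWithin] with α hα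
        exact sub_pos.2 hα.2
    have h2 : Tendsto (fun α : ℝ => (1 + 1 / s) - (2 * s - α)⁻¹)
        (𝓝[Ioo (0:ℝ) (2 * s)] (2 * s)) atBot := by
      simp only [sub_eq_add_neg (1 + 1 / s)]
      exact tendsto_atBot_add_const_left _ _
        (tendsto_neg_atTop_atBot.comp (tendsto_inv_nhdsGT_zero.comp h1))
    refine tendsto_atBot_mono' _ ?_ h2
    filter_upwards [self_mem_nhdsWithin,
      mem_nhdsWithin_of_mem_nhds (Ioi_mem_nhds (show 2 * s - 1 < 2 * s by linarith))] with α hα hα1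
    exact qfun_le hs hα (le_of_lt hα1)
end

section
/- For every s ∈ (0,1) and every ν > 0 there exists a unique α₀ ∈ (max(0, 2s−1), 2s) such that q(s, α₀) = (1 − ν/2)·(1/(2s)). -/
/-!
Write `c = 2s - 1` and `m = max 0 c`. The claim says that `J(α) = ∫₀¹ F(α, t) dt` takes the value
`ν / (4s)` exactly once on `(m, 2s)`, where `F` is the integrand of `q`.

The numerator expands to `t^α + t^(c-α) - 1 - t^c`, which is strictly increasing in `α ≥ m`, because
the difference of its values at `α < β` factors as `(1 - t^(β-α)) (t^(c-β) - t^α)` and `c - β < α`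
(`integrand_lt`). So `J` is strictly increasing, which gives uniqueness.

For existence, `J(m) = 0` since one factor of the numerator vanishes. The bound
`0 ≤ F(α, t) ≤ 2 t^(c-α) (1-t)^(1-2s)` by a Beta integrand gives integrability
(`integrable_integrand`); monotonicity then makes `F(b, ·)` a dominating function on `[m, b]`, so `J`
is continuous there (`continuousOn_J`). Finally `J(α) ≥ 1/(2s-α) - 1 - 1/(2s)` (`J_lower`), obtained
by dropping the denominator and the term `t^α`, is unbounded as `α → 2s`, and the intermediate value
theorem applies.
-/

open MeasureTheory Filter Set Topology

/-- The integrand in the definition of `qfun`. -/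
noncomputable def integrand (s α t : ℝ) : ℝ :=
  (t ^ α - 1) * (1 - t ^ (2 * s - 1 - α)) / (1 - t) ^ (1 + 2 * s)

lemma numerator_expand {t : ℝ} (ht : 0 < t) (s α : ℝ) :
    (t ^ α - 1) * (1 - t ^ (2 * s - 1 - α)) =
      t ^ α + t ^ (2 * s - 1 - α) - 1 - t ^ (2 * s - 1) := by
  have h : t ^ (2 * s - 1) = t ^ α * t ^ (2 * s - 1 - α) := by
    rw [← Real.rpow_add ht]; congr 1; ring
  rw [h]; ring

lemma integrand_lt {s α β t : ℝ} (ht : t ∈ Ioo (0 : ℝ) 1)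
    (hα : max 0 (2 * s - 1) ≤ α) (hαβ : α < β) : integrand s α t < integrand s β t := by
  obtain ⟨ht0, ht1⟩ := ht
  obtain ⟨h0, hc⟩ := max_le_iff.1 hα
  unfold integrand
  have hden : 0 < (1 - t) ^ (1 + 2 * s) := Real.rpow_pos_of_pos (by linarith) _
  rw [div_lt_div_iff_of_pos_right hden, numerator_expand ht0, numerator_expand ht0]
  have hr : t ^ (β - α) < 1 := Real.rpow_lt_one ht0.le ht1 (by linarith)
  have hw : t ^ α < t ^ (2 * s - 1 - β) :=
    Real.rpow_lt_rpow_of_exponent_gt ht0 ht1 (by linarith)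
  have e1 : t ^ β = t ^ α * t ^ (β - α) := by
    rw [← Real.rpow_add ht0]; congr 1; ring
  have e2 : t ^ (2 * s - 1 - α) = t ^ (2 * s - 1 - β) * t ^ (β - α) := by
    rw [← Real.rpow_add ht0]; congr 1; ring
  rw [e1, e2]
  nlinarith [mul_pos (sub_pos.2 hr) (sub_pos.2 hw)]

lemma integrand_le {s α β t : ℝ} (ht : t ∈ Ioo (0 : ℝ) 1)
    (hα : max 0 (2 * s - 1) ≤ α) (hαβ : α ≤ β) : integrand s α t ≤ integrand s β t := by
  rcases hαβ.eq_or_lt with rfl | h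
  · exact le_rfl
  · exact (integrand_lt ht hα h).le

lemma numerator_nonneg {s α t : ℝ} (ht : t ∈ Ioo (0 : ℝ) 1)
    (hα : max 0 (2 * s - 1) ≤ α) : 0 ≤ (t ^ α - 1) * (1 - t ^ (2 * s - 1 - α)) := by
  obtain ⟨h0, hc⟩ := max_le_iff.1 hα
  have h1 : t ^ α ≤ 1 := Real.rpow_le_one ht.1.le ht.2.le h0
  have h2 : 1 ≤ t ^ (2 * s - 1 - α) :=
    Real.one_le_rpow_of_pos_of_le_one_of_nonpos ht.1 ht.2.le (by linarith)
  nlinarith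

lemma integrand_nonneg {s α t : ℝ} (ht : t ∈ Ioo (0 : ℝ) 1)
    (hα : max 0 (2 * s - 1) ≤ α) : 0 ≤ integrand s α t :=
  div_nonneg (numerator_nonneg ht hα) (Real.rpow_nonneg (by linarith [ht.2]) _)

lemma integrable_beta {u v : ℝ} (hu : 0 < u) (hv : 0 < v) :
    IntegrableOn (fun t : ℝ => t ^ (u - 1) * (1 - t) ^ (v - 1)) (Ioo 0 1) := by
  have h := Complex.betaIntegral_convergent (u := (u : ℂ)) (v := (v : ℂ)) (by simpa) (by simpa)
  rw [intervalIntegrable_iff_integrableOn_Ioo_of_le zero_le_one] at h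
  have hn : IntegrableOn _ (Ioo (0 : ℝ) 1) := h.norm
  refine hn.congr_fun (fun t ht => ?_) measurableSet_Ioo
  have h1 : (1 - (t : ℂ)) = ((1 - t : ℝ) : ℂ) := by push_cast; rfl
  have h2 : ((u : ℂ) - 1) = ((u - 1 : ℝ) : ℂ) := by push_cast; rfl
  have h3 : ((v : ℂ) - 1) = ((v - 1 : ℝ) : ℂ) := by push_cast; rfl
  simp only [norm_mul]
  rw [h1, h2, h3, Complex.norm_cpow_eq_rpow_re_of_pos ht.1,
    Complex.norm_cpow_eq_rpow_re_of_pos (sub_pos.2 ht.2)]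
  simp

lemma integrand_le_beta {s α t : ℝ} (hs : s ∈ Ioo (0 : ℝ) 1) (ht : t ∈ Ioo (0 : ℝ) 1)
    (hα : max 0 (2 * s - 1) ≤ α) (hα' : α < 2 * s) :
    integrand s α t ≤ 2 * (t ^ ((2 * s - α) - 1) * (1 - t) ^ ((2 - 2 * s) - 1)) := by
  obtain ⟨ht0, ht1⟩ := ht
  obtain ⟨h0, hc⟩ := max_le_iff.1 hα
  obtain ⟨hs0, hs1⟩ := hs
  have h1t : 0 < 1 - t := by linarith
  have hden : 0 < (1 - t) ^ (1 + 2 * s) := Real.rpow_pos_of_pos h1t _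
  unfold integrand
  rw [div_le_iff₀ hden]
  have e1 : (1 - t) ^ ((2 - 2 * s) - 1) * (1 - t) ^ (1 + 2 * s) = (1 - t) ^ 2 := by
    rw [← Real.rpow_add h1t, ← Real.rpow_natCast]; congr 1; push_cast; ring
  have e2 : (2 * s - α) - 1 = 2 * s - 1 - α := by ring
  rw [mul_assoc, mul_assoc, e1, e2]
  have hA : 1 - t ^ α ≤ 2 * (1 - t) := by
    have : t ^ (2 : ℝ) ≤ t ^ α :=
      Real.rpow_le_rpow_of_exponent_ge ht0 ht1.le (by linarith)
    rw [Real.rpow_two] at this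
    nlinarith
  have hA0 : 0 ≤ 1 - t ^ α := sub_nonneg.2 (Real.rpow_le_one ht0.le ht1.le h0)
  have hw : 0 < t ^ (2 * s - 1 - α) := Real.rpow_pos_of_pos ht0 _
  have hB : t ^ (2 * s - 1 - α) - 1 ≤ t ^ (2 * s - 1 - α) * (1 - t) := by
    have : t ^ (2 * s - 1 - α) * t ≤ 1 := by
      rw [← Real.rpow_add_one ht0.ne']
      exact Real.rpow_le_one ht0.le ht1.le (by linarith)
    linarith
  calc (t ^ α - 1) * (1 - t ^ (2 * s - 1 - α))
      = (1 - t ^ α) * (t ^ (2 * s - 1 - α) - 1) := by ring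
    _ ≤ (1 - t ^ α) * (t ^ (2 * s - 1 - α) * (1 - t)) := mul_le_mul_of_nonneg_left hB hA0
    _ ≤ (2 * (1 - t)) * (t ^ (2 * s - 1 - α) * (1 - t)) :=
        mul_le_mul_of_nonneg_right hA (by positivity)
    _ = _ := by ring

lemma measurable_integrand (s α : ℝ) : Measurable (integrand s α) := by
  unfold integrand
  fun_prop

lemma integrable_integrand {s α : ℝ} (hs : s ∈ Ioo (0 : ℝ) 1)
    (hα : max 0 (2 * s - 1) ≤ α) (hα' : α < 2 * s) :
    IntegrableOn (integrand s α) (Ioo 0 1) := by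
  have hb := (integrable_beta (u := 2 * s - α) (v := 2 - 2 * s) (by linarith)
    (by linarith [hs.2])).const_mul 2
  refine Integrable.mono' hb (measurable_integrand s α).aestronglyMeasurable ?_
  filter_upwards [ae_restrict_mem measurableSet_Ioo] with t ht
  rw [Real.norm_of_nonneg (integrand_nonneg ht hα)]
  exact integrand_le_beta hs ht hα hα'

/-- The integral in `qfun`. -/
noncomputable def J (s α : ℝ) : ℝ := ∫ t in Ioo (0 : ℝ) 1, integrand s α t

lemma J_lt {s α β : ℝ} (hs : s ∈ Ioo (0 : ℝ) 1) (hα : max 0 (2 * s - 1) ≤ α) (hαβ : α < β)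
    (hβ : β < 2 * s) : J s α < J s β := by
  have h1 := integrable_integrand hs hα (hαβ.trans hβ)
  have h2 := integrable_integrand hs (hα.trans hαβ.le) hβ
  have h3 : 0 < ∫ t in (0 : ℝ)..1, (integrand s β t - integrand s α t) := by
    refine intervalIntegral.intervalIntegral_pos_of_pos_on ?_
      (fun t ht => sub_pos.2 (integrand_lt ht hα hαβ)) zero_lt_one
    rw [intervalIntegrable_iff_integrableOn_Ioo_of_le zero_le_one]
    exact h2.sub h1
  rw [intervalIntegral.integral_of_le zero_le_one, integral_Ioc_eq_integral_Ioo,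
    integral_sub h2 h1] at h3
  exact sub_pos.1 h3

lemma continuousOn_J {s b : ℝ} (hs : s ∈ Ioo (0 : ℝ) 1) (hb : max 0 (2 * s - 1) ≤ b)
    (hb' : b < 2 * s) : ContinuousOn (J s) (Icc (max 0 (2 * s - 1)) b) := by
  refine continuousOn_of_dominated (bound := integrand s b)
    (fun α _ => (measurable_integrand s α).aestronglyMeasurable) (fun α hα => ?_)
    (integrable_integrand hs hb hb') ?_
  · filter_upwards [ae_restrict_mem measurableSet_Ioo] with t ht
    rw [Real.norm_of_nonneg (integrand_nonneg ht hα.1)]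
    exact integrand_le ht hα.1 hα.2
  · filter_upwards [ae_restrict_mem measurableSet_Ioo] with t ht
    have h1 : Continuous fun α : ℝ => t ^ α := Real.continuous_const_rpow ht.1.ne'
    have h2 : Continuous fun α : ℝ => t ^ (2 * s - 1 - α) :=
      h1.comp (continuous_const.sub continuous_id)
    unfold integrand
    exact (((h1.sub continuous_const).mul (continuous_const.sub h2)).div_const _).continuousOn

lemma J_left (s : ℝ) : J s (max 0 (2 * s - 1)) = 0 := by
  unfold J integrand
  rcases max_choice 0 (2 * s - 1) with h | h <;> rw [h] <;> simp

lemma J_lower {s α : ℝ} (hs : s ∈ Ioo (0 : ℝ) 1) (hα : max 0 (2 * s - 1) ≤ α)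
    (hα' : α < 2 * s) : 1 / (2 * s - α) - 1 - 1 / (2 * s) ≤ J s α := by
  have hs0 := hs.1
  have i1 : IntervalIntegrable (fun t : ℝ => t ^ (2 * s - 1 - α)) volume 0 1 :=
    intervalIntegral.intervalIntegrable_rpow' (by linarith)
  have i2 : IntervalIntegrable (fun t : ℝ => t ^ (2 * s - 1)) volume 0 1 :=
    intervalIntegral.intervalIntegrable_rpow' (by linarith)
  have i3 : IntervalIntegrable (fun _ : ℝ => (1 : ℝ)) volume 0 1 := intervalIntegrable_const
  have hint : ∫ t in (0 : ℝ)..1, (t ^ (2 * s - 1 - α) - 1 - t ^ (2 * s - 1)) =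
      1 / (2 * s - α) - 1 - 1 / (2 * s) := by
    have e1 : 2 * s - 1 - α + 1 = 2 * s - α := by ring
    have e2 : 2 * s - 1 + 1 = 2 * s := by ring
    rw [intervalIntegral.integral_sub (i1.sub i3) i2, intervalIntegral.integral_sub i1 i3,
      integral_rpow (Or.inl (by linarith)), integral_rpow (Or.inl (by linarith)), e1, e2,
      Real.zero_rpow (by linarith), Real.zero_rpow (by linarith)]
    simp
  rw [← hint, intervalIntegral.integral_of_le zero_le_one, integral_Ioc_eq_integral_Ioo]
  refine setIntegral_mono_on ?_ (integrable_integrand hs hα hα') measurableSet_Ioo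
    (fun t ht => ?_)
  · exact (intervalIntegrable_iff_integrableOn_Ioo_of_le zero_le_one).1 ((i1.sub i3).sub i2)
  · have hN := numerator_nonneg ht hα
    have h1t : 0 < 1 - t := sub_pos.2 ht.2
    have hd0 : 0 < (1 - t) ^ (1 + 2 * s) := Real.rpow_pos_of_pos h1t _
    have hd1 : (1 - t) ^ (1 + 2 * s) ≤ 1 :=
      Real.rpow_le_one h1t.le (by linarith [ht.1]) (by linarith)
    have h1 : (t ^ α - 1) * (1 - t ^ (2 * s - 1 - α)) ≤ integrand s α t :=
      le_div_self hN hd0 hd1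
    rw [numerator_expand ht.1] at h1
    have h2 : 0 < t ^ α := Real.rpow_pos_of_pos ht.1 _
    linarith

/-- For every `s ∈ (0,1)` and `ν > 0` there is a unique `α₀ ∈ (max(0,2s−1), 2s)` with
`q(s,α₀) = (1 − ν/2)·(1/(2s))`. -/
theorem stmt2 (s ν : ℝ) (hs : s ∈ Set.Ioo (0:ℝ) 1) (hν : 0 < ν) :
    ∃! α₀ : ℝ, α₀ ∈ Set.Ioo (max 0 (2 * s - 1)) (2 * s) ∧
      qfun s α₀ = (1 - ν / 2) * (1 / (2 * s)) := by
  have hs0 := hs.1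
  have hq : ∀ α, qfun s α = (1 - ν / 2) * (1 / (2 * s)) ↔ J s α = ν / 2 * (1 / (2 * s)) := by
    intro α
    have : qfun s α = 1 / (2 * s) - J s α := rfl
    rw [this]
    constructor <;> intro h <;> linarith
  simp only [hq]
  set K := ν / 2 * (1 / (2 * s)) with hK
  have hKpos : 0 < K := by positivity
  set m := max 0 (2 * s - 1) with hm
  have hm2 : m < 2 * s := max_lt (by linarith) (by linarith)
  -- `b = 2s - ε` with `1/ε ≥ K + 1 + 1/(2s)`, so that the lower bound for `J` reaches `K` at `b`.
  have hX : 0 < K + 1 + 1 / (2 * s) := by positivity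
  obtain ⟨b, hmb, hb2, hbK⟩ : ∃ b, m ≤ b ∧ b < 2 * s ∧ K ≤ J s b := by
    set ε := min (1 / (K + 1 + 1 / (2 * s))) (2 * s - m) with hε
    have hε0 : 0 < ε := lt_min (by positivity) (by linarith)
    have hε1 : ε ≤ 1 / (K + 1 + 1 / (2 * s)) := min_le_left _ _
    have hε2 : ε ≤ 2 * s - m := min_le_right _ _
    have hmb : m ≤ 2 * s - ε := by linarith
    refine ⟨2 * s - ε, hmb, by linarith, ?_⟩
    have h1 := J_lower hs hmb (by linarith)
    rw [sub_sub_cancel] at h1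
    have h2 : K + 1 + 1 / (2 * s) ≤ 1 / ε := (le_one_div hε0 hX).1 hε1
    linarith
  obtain ⟨a, ha, haK⟩ := intermediate_value_Icc hmb (continuousOn_J hs hmb hb2)
    (show K ∈ Icc (J s m) (J s b) from ⟨by rw [hm, J_left]; exact hKpos.le, hbK⟩)
  have hma : m < a := by
    refine lt_of_le_of_ne ha.1 fun h => ?_
    rw [← h, hm, J_left] at haK
    exact hKpos.ne haK
  refine ⟨a, ⟨⟨hma, ha.2.trans_lt hb2⟩, haK⟩, ?_⟩
  rintro y ⟨⟨hy1, hy2⟩, hyK⟩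
  rcases lt_trichotomy y a with h | h | h
  · exact absurd (J_lt hs hy1.le h (ha.2.trans_lt hb2)) (by rw [hyK, haK]; exact lt_irrefl _)
  · exact h
  · exact absurd (J_lt hs hma.le h hy2) (by rw [hyK, haK]; exact lt_irrefl _)
end

section
/- Let s ∈ (0,1), α ∈ (0,2s) and t > 0. Then the principal-value limit lim_{ε→0⁺} ∫_{{r ∈ ℝ : |r−t| > ε}} (ρ_α(t) − ρ_α(r))/|t−r|^{1+2s} dr exists and equals q(s,α) · t^{α−2s}. -/
/-!
The substitution `r = t * x` extracts the factor `t ^ (α - 2 * s)` and reduces the claim to `t = 1`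
(`truncated_integral_scale`).

For `t = 1` the truncated domain splits into three pieces. The half-line `r ≤ 0` contributes exactly
`1 / (2 * s)`. The piece `0 < r < 1 - d` carries the integrand
`pvNear s α u = (1 - u ^ α) / (1 - u) ^ (1 + 2 * s)`. The inversion `r = u⁻¹` maps the piece
`r > 1 + d` to `0 < u < 1 / (1 + d)`, with integrand
`pvFar s α u = -u ^ (2 * s - 1 - α) * pvNear s α u`.
The sum `pvNear + pvFar` is minus the integrand defining `qfun`. It is absolutely integrable on
`(0, 1)`: both factors of its numerator are `O(1 - u)` at `1`, so it is at most a constant times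
`(1 - u) ^ (1 - 2 * s) * (1 + u ^ (2 * s - 1 - α))`, a sum of beta integrands
(`integrableOn_pvNear_add_pvFar`). What is left is the integral of `pvFar` over
`1 - d ≤ u < 1 / (1 + d)`, an interval of length at most `d ^ 2` on which the integrand is
`O(d ^ (-2 * s))`; it tends to `0` because `s < 1` (`tendsto_mismatch`).
-/

open MeasureTheory Filter Set Topology

/-- `ρ_α(t) = t^α` for `t > 0` and `ρ_α(t) = 0` for `t ≤ 0`. -/
noncomputable def rhoPow (α t : ℝ) : ℝ := if 0 < t then t ^ α else 0

/-! ### Pointwise bounds and beta integrands -/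

lemma one_sub_rpow_le {u a : ℝ} (hu0 : 0 < u) (hu1 : u < 1) (ha : a ≤ 2) :
    1 - u ^ a ≤ 2 * (1 - u) := by
  have h : u ^ (2:ℝ) ≤ u ^ a := Real.rpow_le_rpow_of_exponent_ge hu0 hu1.le ha
  rw [Real.rpow_two] at h
  nlinarith [sq_nonneg (1 - u)]

/-- The weight `1 + u ^ b` absorbs the blow-up at `0` when `b < 0`, while the factor `1 - u` keeps
the first-order vanishing at `1`. -/
lemma abs_one_sub_rpow_le_s3 {u b : ℝ} (hu0 : 0 < u) (hu1 : u < 1) (hb : -1 < b) (hb' : b < 1) :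
    |1 - u ^ b| ≤ 2 * (1 - u) * (1 + u ^ b) := by
  have hp : 0 < u ^ b := Real.rpow_pos_of_pos hu0 b
  rcases le_total 0 b with h | h
  · have h1 : u ^ b ≤ 1 := Real.rpow_le_one hu0.le hu1.le h
    rw [abs_of_nonneg (by linarith)]
    have := one_sub_rpow_le hu0 hu1 (by linarith : b ≤ 2)
    nlinarith [mul_pos (sub_pos.2 hu1) hp]
  · have h1 : 1 ≤ u ^ b := Real.one_le_rpow_of_pos_of_le_one_of_nonpos hu0 hu1.le h
    rw [abs_of_nonpos (by linarith)]
    have h2 := one_sub_rpow_le hu0 hu1 (by linarith : -b ≤ 2)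
    have h3 : u ^ b * u ^ (-b) = 1 := by
      rw [← Real.rpow_add hu0]; simp
    nlinarith [mul_le_mul_of_nonneg_left h2 hp.le, sub_pos.2 hu1]

lemma integrableOn_rpow_mul_one_sub_rpow {a b : ℝ} (ha : -1 < a) (hb : -1 < b) :
    IntegrableOn (fun u : ℝ => u ^ a * (1 - u) ^ b) (Ioo 0 1) := by
  have h := Complex.betaIntegral_convergent (u := (a + 1 : ℝ)) (v := (b + 1 : ℝ))
    (by simp; linarith) (by simp; linarith)
  rw [intervalIntegrable_iff_integrableOn_Ioo_of_le zero_le_one] at h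
  refine IntegrableOn.congr_fun h.norm (fun u hu => ?_) measurableSet_Ioo
  have h1 : 0 < 1 - u := sub_pos.2 hu.2
  have e : (1 - (u : ℂ)) = ((1 - u : ℝ) : ℂ) := by simp
  simp only [norm_mul]
  rw [e, Complex.norm_cpow_eq_rpow_re_of_pos hu.1, Complex.norm_cpow_eq_rpow_re_of_pos h1]
  simp

/-! ### The integrands on the unit interval -/

/-- The part of the normalised integrand (`t = 1`) on `0 < u < 1`. -/
noncomputable def pvNear (s α u : ℝ) : ℝ := (1 - u ^ α) / (1 - u) ^ (1 + 2 * s)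

/-- The part of the normalised integrand (`t = 1`) on `r > 1`, pulled back to `0 < u < 1` along
`r = u⁻¹`, Jacobian included. -/
noncomputable def pvFar (s α u : ℝ) : ℝ :=
  (u ^ α - 1) * u ^ (2 * s - 1 - α) / (1 - u) ^ (1 + 2 * s)

lemma pvNear_add_pvFar (s α u : ℝ) : pvNear s α u + pvFar s α u =
    -((u ^ α - 1) * (1 - u ^ (2 * s - 1 - α)) / (1 - u) ^ (1 + 2 * s)) := by
  unfold pvNear pvFar; ring

lemma measurable_pvNear (s α : ℝ) : Measurable (pvNear s α) := by
  unfold pvNear; fun_prop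

lemma measurable_pvFar (s α : ℝ) : Measurable (pvFar s α) := by
  unfold pvFar; fun_prop

lemma abs_rpow_sub_one_div_le {s α u : ℝ} (hα : α ∈ Ioo 0 (2 * s)) (hs : s < 1)
    (hu : u ∈ Ioo (0:ℝ) 1) :
    |1 - u ^ α| / (1 - u) ^ (1 + 2 * s) ≤ 2 * (1 - u) ^ (-(2 * s)) := by
  have h1 : 0 < 1 - u := sub_pos.2 hu.2
  have h2 : u ^ α ≤ 1 := Real.rpow_le_one hu.1.le hu.2.le hα.1.le
  rw [abs_of_nonneg (by linarith), div_le_iff₀ (Real.rpow_pos_of_pos h1 _), mul_assoc,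
    ← Real.rpow_add h1]
  simpa using one_sub_rpow_le hu.1 hu.2 (by linarith [hα.2] : α ≤ 2)

lemma abs_pvFar_le {s α u : ℝ} (hα : α ∈ Ioo 0 (2 * s)) (hs : s < 1) (hu : u ∈ Ioo (0:ℝ) 1) :
    |pvFar s α u| ≤ 2 * (1 - u) ^ (-(2 * s)) * u ^ (2 * s - 1 - α) := by
  have h1 : 0 < 1 - u := sub_pos.2 hu.2
  have hp : 0 < u ^ (2 * s - 1 - α) := Real.rpow_pos_of_pos hu.1 _
  have e : |pvFar s α u| = |1 - u ^ α| / (1 - u) ^ (1 + 2 * s) * u ^ (2 * s - 1 - α) := by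
    unfold pvFar
    rw [abs_div, abs_mul, abs_of_pos hp, abs_of_pos (Real.rpow_pos_of_pos h1 _), abs_sub_comm]
    ring
  rw [e]
  exact mul_le_mul_of_nonneg_right (abs_rpow_sub_one_div_le hα hs hu) hp.le

/-- Absolute integrability of the integrand defining `qfun`. Each summand alone behaves like a
multiple of `(1 - u) ^ (-2 * s)` at `1`, which is not integrable for `s ≥ 1 / 2`. -/
lemma integrableOn_pvNear_add_pvFar {s α : ℝ} (hs : s ∈ Ioo (0:ℝ) 1) (hα : α ∈ Ioo 0 (2 * s)) :
    IntegrableOn (fun u => pvNear s α u + pvFar s α u) (Ioo 0 1) := by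
  obtain ⟨hs0, hs1⟩ := hs
  have hα' := hα
  obtain ⟨hα0, hα1⟩ := hα'
  have i1 := integrableOn_rpow_mul_one_sub_rpow (a := 0) (b := 1 - 2 * s) (by linarith)
    (by linarith)
  have i2 := integrableOn_rpow_mul_one_sub_rpow (a := 2 * s - 1 - α) (b := 1 - 2 * s)
    (by linarith) (by linarith)
  refine Integrable.mono' ((i1.add i2).const_mul 4)
    ((measurable_pvNear s α).add (measurable_pvFar s α)).aestronglyMeasurable ?_
  filter_upwards [ae_restrict_mem measurableSet_Ioo] with u hu
  have h1 : 0 < 1 - u := sub_pos.2 hu.2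
  have hA := abs_rpow_sub_one_div_le hα hs1 hu
  have hB := abs_one_sub_rpow_le_s3 (b := 2 * s - 1 - α) hu.1 hu.2 (by linarith) (by linarith)
  have e : (1 - u) ^ (1 - 2 * s) = (1 - u) ^ (-(2 * s)) * (1 - u) := by
    rw [← Real.rpow_add_one h1.ne']; ring_nf
  rw [pvNear_add_pvFar, Real.norm_eq_abs, abs_neg, abs_div, abs_mul,
    abs_of_pos (Real.rpow_pos_of_pos h1 _), abs_sub_comm, mul_div_right_comm]
  refine (mul_le_mul hA hB (abs_nonneg _) (by positivity)).trans (le_of_eq ?_)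
  simp only [Pi.add_apply, Real.rpow_zero, e]
  ring

lemma integrableOn_pvFar {s α c : ℝ} (hs : s ∈ Ioo (0:ℝ) 1) (hα : α ∈ Ioo 0 (2 * s))
    (hc : c < 1) : IntegrableOn (pvFar s α) (Ioo 0 c) := by
  have i : IntegrableOn (fun u : ℝ => u ^ (2 * s - 1 - α)) (Ioo 0 1) := by
    have := integrableOn_rpow_mul_one_sub_rpow (a := 2 * s - 1 - α) (b := 0)
      (by linarith [hα.2]) (by linarith)
    simpa using this
  have i' := i.mono_set (Ioo_subset_Ioo_right hc.le)
  refine Integrable.mono' (i'.const_mul (2 * (1 - c) ^ (-(2 * s))))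
    (measurable_pvFar s α).aestronglyMeasurable ?_
  filter_upwards [ae_restrict_mem measurableSet_Ioo] with u hu
  refine (abs_pvFar_le hα hs.2 ⟨hu.1, hu.2.trans hc⟩).trans ?_
  have := Real.rpow_le_rpow_of_nonpos (x := 1 - c) (y := 1 - u) (z := -(2 * s))
    (by linarith) (by linarith [hu.2]) (by linarith [hs.1])
  have hp : 0 < u ^ (2 * s - 1 - α) := Real.rpow_pos_of_pos hu.1 _
  gcongr

lemma integrableOn_pvNear {s α c : ℝ} (hs : s ∈ Ioo (0:ℝ) 1) (hα : α ∈ Ioo 0 (2 * s))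
    (hc : c < 1) : IntegrableOn (pvNear s α) (Ioo 0 c) := by
  have := ((integrableOn_pvNear_add_pvFar hs hα).mono_set (Ioo_subset_Ioo_right hc.le)).sub
    (integrableOn_pvFar hs hα hc)
  refine this.congr_fun (fun u _ => by simp) measurableSet_Ioo

/-! ### The three pieces of the truncated integral -/

lemma image_one_sub_Ici : (fun y : ℝ => 1 - y) '' Ici 1 = Iic 0 := by simp

lemma neg_half_integrand {s α : ℝ} :
    EqOn (fun y : ℝ => |(-1:ℝ)| •
      ((rhoPow α 1 - rhoPow α (1 - y)) / |1 - (1 - y)| ^ (1 + 2 * s)))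
      (fun y => y ^ (-(1 + 2 * s))) (Ici 1) := by
  intro y hy
  have hy : 1 ≤ y := hy
  have h : rhoPow α (1 - y) = 0 := if_neg (by linarith)
  have h1 : rhoPow α 1 = 1 := by simp [rhoPow]
  simp only [h, h1, sub_sub_cancel, abs_of_nonneg (by linarith : 0 ≤ y), abs_neg, abs_one,
    one_smul, sub_zero, Real.rpow_neg (by linarith : 0 ≤ y), one_div]

lemma integrableOn_neg_half {s α : ℝ} (hs : 0 < s) :
    IntegrableOn (fun r => (rhoPow α 1 - rhoPow α r) / |1 - r| ^ (1 + 2 * s)) (Iic 0) := by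
  rw [← image_one_sub_Ici, integrableOn_image_iff_integrableOn_abs_deriv_smul
    (f := fun y => 1 - y) (f' := fun _ => -1)
       measurableSet_Ici (fun x _ => ((hasDerivAt_id x).const_sub 1).hasDerivWithinAt)
    (fun x _ y _ h => by simpa using h), integrableOn_congr_fun neg_half_integrand measurableSet_Ici,
    integrableOn_Ici_iff_integrableOn_Ioi]
  exact integrableOn_Ioi_rpow_of_lt (by linarith) one_pos

lemma integral_neg_half {s α : ℝ} (hs : 0 < s) :
    ∫ r in Iic 0, (rhoPow α 1 - rhoPow α r) / |1 - r| ^ (1 + 2 * s) = 1 / (2 * s) := by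
  rw [← image_one_sub_Ici, integral_image_eq_integral_abs_deriv_smul
    (f := fun y => 1 - y) (f' := fun _ => -1)
       measurableSet_Ici (fun x _ => ((hasDerivAt_id x).const_sub 1).hasDerivWithinAt)
    (fun x _ y _ h => by simpa using h), setIntegral_congr_fun measurableSet_Ici neg_half_integrand,
    integral_Ici_eq_integral_Ioi, integral_Ioi_rpow_of_lt (by linarith) one_pos]
  simp only [Real.one_rpow]
  field_simp
  ring

lemma image_inv_Ioo {d : ℝ} (hd : 0 < d) :
    (fun u : ℝ => u⁻¹) '' Ioo 0 (1 / (1 + d)) = Ioi (1 + d) := by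
  rw [image_inv_eq_inv, one_div, Set.inv_Ioo_0_left (by positivity), inv_inv]

lemma far_half_integrand {s α c : ℝ} (hc : c ≤ 1) :
    EqOn (fun u : ℝ => |-(u ^ 2)⁻¹| •
      ((rhoPow α 1 - rhoPow α u⁻¹) / |1 - u⁻¹| ^ (1 + 2 * s)))
      (pvFar s α) (Ioo 0 c) := by
  intro u hu
  have h0 : 0 < u := hu.1
  have h1 : 0 < 1 - u := by linarith [hu.2]
  have e1 : rhoPow α 1 = 1 := by simp [rhoPow]
  have e2 : rhoPow α u⁻¹ = (u ^ α)⁻¹ := by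
    rw [rhoPow, if_pos (inv_pos.2 h0), Real.inv_rpow h0.le]
  have e3 : |1 - u⁻¹| = (1 - u) / u := by
    rw [abs_sub_comm, abs_of_nonneg (by rw [sub_nonneg, one_le_inv₀ h0]; linarith)]
    field_simp
  have e4 : u ^ (2 * s - 1 - α) = u ^ (1 + 2 * s) * (u ^ α)⁻¹ * (u ^ 2)⁻¹ := by
    rw [← Real.rpow_neg h0.le, ← Real.rpow_two, ← Real.rpow_neg h0.le, ← Real.rpow_add h0,
      ← Real.rpow_add h0]
    ring_nf
  have hp : 0 < u ^ α := Real.rpow_pos_of_pos h0 _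
  have hq : 0 < u ^ (1 + 2 * s) := Real.rpow_pos_of_pos h0 _
  have hr : 0 < (1 - u) ^ (1 + 2 * s) := Real.rpow_pos_of_pos h1 _
  simp only [e1, e2, e3, pvFar, e4, Real.div_rpow h1.le h0.le, abs_neg, smul_eq_mul]
  rw [abs_of_pos (by positivity)]
  field_simp

lemma integrableOn_far_half {s α d : ℝ} (hs : s ∈ Ioo (0:ℝ) 1) (hα : α ∈ Ioo 0 (2 * s))
    (hd : 0 < d) :
    IntegrableOn (fun r => (rhoPow α 1 - rhoPow α r) / |1 - r| ^ (1 + 2 * s)) (Ioi (1 + d)) := by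
  have hc : 1 / (1 + d) < 1 := by rw [div_lt_one (by positivity)]; linarith
  rw [← image_inv_Ioo hd, integrableOn_image_iff_integrableOn_abs_deriv_smul
    (f' := fun u => -(u ^ 2)⁻¹) measurableSet_Ioo
    (fun x hx => (hasDerivAt_inv hx.1.ne').hasDerivWithinAt)
    (fun x _ y _ h => by simpa using h),
    integrableOn_congr_fun (far_half_integrand hc.le) measurableSet_Ioo]
  exact integrableOn_pvFar hs hα hc

lemma integral_far_half {s α d : ℝ} (hd : 0 < d) :
    ∫ r in Ioi (1 + d), (rhoPow α 1 - rhoPow α r) / |1 - r| ^ (1 + 2 * s) =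
      ∫ u in Ioo 0 (1 / (1 + d)), pvFar s α u := by
  have hc : 1 / (1 + d) < 1 := by rw [div_lt_one (by positivity)]; linarith
  rw [← image_inv_Ioo hd, integral_image_eq_integral_abs_deriv_smul
    (f' := fun u => -(u ^ 2)⁻¹) measurableSet_Ioo
    (fun x hx => (hasDerivAt_inv hx.1.ne').hasDerivWithinAt)
    (fun x _ y _ h => by simpa using h),
    setIntegral_congr_fun measurableSet_Ioo (far_half_integrand hc.le)]

lemma near_half_integrand {s α c : ℝ} (hc : c ≤ 1) :
    EqOn (fun r => (rhoPow α 1 - rhoPow α r) / |1 - r| ^ (1 + 2 * s)) (pvNear s α) (Ioo 0 c) := by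
  intro u hu
  have h1 : 0 < 1 - u := by linarith [hu.2]
  simp [pvNear, rhoPow, hu.1, abs_of_pos h1]

/-- The truncated integral at `t = 1`. The symmetric truncation `|r - 1| > d` becomes
`u < 1 - d` on the near side and `u < 1 / (1 + d)` on the inverted far side; the last summand is
the resulting mismatch. -/
lemma truncated_integral_one {s α d : ℝ} (hs : s ∈ Ioo (0:ℝ) 1) (hα : α ∈ Ioo 0 (2 * s))
    (hd : 0 < d) (hd1 : d < 1) :
    ∫ r in {r : ℝ | d < |r - 1|}, (rhoPow α 1 - rhoPow α r) / |1 - r| ^ (1 + 2 * s) =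
      1 / (2 * s) + (∫ u in Ioo 0 (1 - d), (pvNear s α u + pvFar s α u)) +
        ∫ u in Ico (1 - d) (1 / (1 + d)), pvFar s α u := by
  have hc : 1 / (1 + d) < 1 := by rw [div_lt_one (by positivity)]; linarith
  have hc' : 1 - d ≤ 1 / (1 + d) := by rw [le_div_iff₀ (by positivity)]; nlinarith
  have hset : {r : ℝ | d < |r - 1|} = (Iic 0 ∪ Ioo 0 (1 - d)) ∪ Ioi (1 + d) := by
    ext r
    simp only [mem_ofPred_eq, mem_union, mem_Iic, mem_Ioo, mem_Ioi, lt_abs]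
    grind
  have iN := integrableOn_pvNear hs hα (by linarith : 1 - d < 1)
  have iF := integrableOn_pvFar hs hα hc
  have iN' := (integrableOn_congr_fun (near_half_integrand (s := s) (α := α)
    (by linarith : 1 - d ≤ 1)) measurableSet_Ioo).2 iN
  have i0 := integrableOn_neg_half (α := α) hs.1
  have hd1' : Disjoint (Iic 0) (Ioo 0 (1 - d)) := by
    rw [Set.disjoint_left]; intro x hx hx'; exact absurd hx'.1 (not_lt.2 hx)
  have hd2' : Disjoint (Iic 0 ∪ Ioo 0 (1 - d)) (Ioi (1 + d)) := by
    rw [Set.disjoint_left]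
    intro x hx hx'
    simp only [mem_union, mem_Iic, mem_Ioo, mem_Ioi] at hx hx'
    grind
  have hsplit : Ioo 0 (1 / (1 + d)) = Ioo 0 (1 - d) ∪ Ico (1 - d) (1 / (1 + d)) :=
    (Ioo_union_Ico_eq_Ioo (by linarith) hc').symm
  have hd3 : Disjoint (Ioo 0 (1 - d)) (Ico (1 - d) (1 / (1 + d))) := by
    rw [Set.disjoint_left]; intro x hx hx'; exact absurd hx.2 (not_lt.2 hx'.1)
  have iF1 : IntegrableOn (pvFar s α) (Ioo 0 (1 - d)) :=
    iF.mono_set (by rw [hsplit]; exact subset_union_left)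
  have iF2 : IntegrableOn (pvFar s α) (Ico (1 - d) (1 / (1 + d))) :=
    iF.mono_set (by rw [hsplit]; exact subset_union_right)
  rw [hset, setIntegral_union hd2' measurableSet_Ioi (i0.union iN')
    (integrableOn_far_half hs hα hd), setIntegral_union hd1' measurableSet_Ioo i0 iN',
    integral_neg_half hs.1, integral_far_half hd,
    setIntegral_congr_fun measurableSet_Ioo (near_half_integrand (by linarith)),
    hsplit, setIntegral_union hd3 measurableSet_Ico iF1 iF2, integral_add iN iF1]
  ring

/-! ### Passage to the limit -/

/-- The mismatch of the two truncations vanishes: its domain has length at most `d ^ 2`, and the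
integrand there is `O(d ^ (-2 * s))`. -/
lemma tendsto_mismatch {s α : ℝ} (hs : s ∈ Ioo (0:ℝ) 1) (hα : α ∈ Ioo 0 (2 * s)) :
    Tendsto (fun d : ℝ => ∫ u in Ico (1 - d) (1 / (1 + d)), pvFar s α u) (𝓝[>] 0) (𝓝 0) := by
  have hlim : Tendsto (fun d : ℝ => 4 * 2 ^ (2 * s) * d ^ (2 - 2 * s)) (𝓝[>] 0) (𝓝 0) := by
    have h : ContinuousAt (fun d : ℝ => 4 * 2 ^ (2 * s) * d ^ (2 - 2 * s)) 0 :=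
      continuousAt_const.mul (Real.continuousAt_rpow_const _ _ (Or.inr (by linarith [hs.2])))
    have h' := h.tendsto.mono_left (nhdsWithin_le_nhds (s := Ioi 0))
    rwa [Real.zero_rpow (by linarith [hs.2]), mul_zero] at h'
  refine squeeze_zero_norm' ?_ hlim
  filter_upwards [Ioo_mem_nhdsGT (by norm_num : (0:ℝ) < 1 / 2)] with d hd
  obtain ⟨hd0, hd1⟩ := hd
  have hpt : ∀ u ∈ Ico (1 - d) (1 / (1 + d)), ‖pvFar s α u‖ ≤ 4 * (d / 2) ^ (-(2 * s)) := by
    intro u hu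
    have hu1 : u ≤ 1 - d / 2 := by
      refine hu.2.le.trans ?_
      rw [div_le_iff₀ (by positivity)]; nlinarith
    have hu0 : 1 / 2 ≤ u := by linarith [hu.1]
    have hup : 0 < u := by linarith
    refine (abs_pvFar_le hα hs.2 ⟨hup, by linarith⟩).trans ?_
    have a1 := Real.rpow_le_rpow_of_nonpos (x := d / 2) (y := 1 - u) (z := -(2 * s))
      (by linarith) (by linarith) (by linarith [hs.1])
    have a2 : u ^ (2 * s - 1 - α) ≤ 2 := by
      have b := Real.rpow_le_rpow_of_exponent_ge hup (by linarith)
        (by linarith [hα.2] : (-1:ℝ) ≤ 2 * s - 1 - α)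
      rw [Real.rpow_neg_one] at b
      have b' : u⁻¹ ≤ 2 := by
        rw [inv_le_comm₀ hup (by norm_num)]; linarith
      linarith
    have a3 : 0 < u ^ (2 * s - 1 - α) := Real.rpow_pos_of_pos hup _
    have a4 : 0 < (d / 2) ^ (-(2 * s)) := Real.rpow_pos_of_pos (by linarith) _
    calc _ ≤ 2 * (d / 2) ^ (-(2 * s)) * 2 := by gcongr
      _ = _ := by ring
  have hlen : volume.real (Ico (1 - d) (1 / (1 + d))) ≤ d ^ 2 := by
    rw [Real.volume_real_Ico]
    refine max_le ?_ (by positivity)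
    rw [sub_le_iff_le_add, div_le_iff₀ (by positivity)]
    nlinarith [pow_pos hd0 3]
  refine (norm_setIntegral_le_of_norm_le_const (by simp) hpt).trans ?_
  have a4 : 0 < (d / 2) ^ (-(2 * s)) := Real.rpow_pos_of_pos (by linarith) _
  refine (mul_le_mul_of_nonneg_left hlen (by positivity)).trans (le_of_eq ?_)
  rw [Real.div_rpow hd0.le (by norm_num), Real.rpow_neg (by norm_num : (0:ℝ) ≤ 2),
    show 2 - 2 * s = -(2 * s) + 2 by ring, Real.rpow_add hd0, Real.rpow_two]
  field_simp

/-- The principal value at `t = 1`. -/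
lemma tendsto_truncated_integral_one {s α : ℝ} (hs : s ∈ Ioo (0:ℝ) 1)
    (hα : α ∈ Ioo 0 (2 * s)) :
    Tendsto (fun d : ℝ => ∫ r in {r : ℝ | d < |r - 1|},
      (rhoPow α 1 - rhoPow α r) / |1 - r| ^ (1 + 2 * s)) (𝓝[>] 0) (𝓝 (qfun s α)) := by
  have hb : Tendsto (fun d : ℝ => 1 - d) (𝓝[>] 0) (𝓝 1) := by
    have : ContinuousAt (fun d : ℝ => 1 - d) 0 := by fun_prop
    simpa using this.tendsto.mono_left (nhdsWithin_le_nhds (s := Ioi 0))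
  have hcov : AECover (volume.restrict (Ioo (0:ℝ) 1)) (𝓝[>] (0:ℝ)) (fun d => Ioo 0 (1 - d)) :=
    aecover_Ioo_of_Ioo tendsto_const_nhds hb
  have hmain := hcov.integral_tendsto_of_countably_generated
    (integrableOn_pvNear_add_pvFar hs hα)
  have hsum := (hmain.const_add (1 / (2 * s))).add (tendsto_mismatch hs hα)
  have hq : 1 / (2 * s) + (∫ u in Ioo 0 1, (pvNear s α u + pvFar s α u)) + 0 = qfun s α := by
    simp only [pvNear_add_pvFar, integral_neg, qfun]
    ring
  rw [hq] at hsum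
  refine hsum.congr' ?_
  filter_upwards [Ioo_mem_nhdsGT one_pos] with d hd
  rw [truncated_integral_one hs hα hd.1 hd.2, Measure.restrict_restrict measurableSet_Ioo,
    inter_eq_left.2 (Ioo_subset_Ioo_right (by linarith [hd.1]))]

/-- Scaling `r = t * x` reduces the truncated integral to the case `t = 1`. -/
lemma truncated_integral_scale {s α t ε : ℝ} (ht : 0 < t) :
    ∫ r in {r : ℝ | ε < |r - t|}, (rhoPow α t - rhoPow α r) / |t - r| ^ (1 + 2 * s) =
      (∫ r in {r : ℝ | ε / t < |r - 1|}, (rhoPow α 1 - rhoPow α r) / |1 - r| ^ (1 + 2 * s)) *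
        t ^ (α - 2 * s) := by
  have himg : {r : ℝ | ε < |r - t|} = (fun x => t * x) '' {r : ℝ | ε / t < |r - 1|} := by
    ext r
    simp only [mem_ofPred_eq, mem_image]
    have key : ∀ x, ε / t < |x - 1| ↔ ε < |t * x - t| := by
      intro x
      rw [div_lt_iff₀ ht, show t * x - t = (x - 1) * t by ring, abs_mul, abs_of_pos ht]
    constructor
    · intro h
      have e : t * (r / t) = r := by field_simp
      exact ⟨r / t, by rw [key, e]; exact h, e⟩
    · rintro ⟨x, hx, rfl⟩
      exact (key x).1 hx
  have hmeas : MeasurableSet {r : ℝ | ε / t < |r - 1|} :=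
    measurableSet_lt measurable_const (by fun_prop)
  rw [himg, integral_image_eq_integral_abs_deriv_smul (f' := fun _ => t) hmeas
    (fun x _ => by simpa using ((hasDerivAt_id x).const_mul t).hasDerivWithinAt)
    (fun x _ y _ h => by simpa [ht.ne'] using h), ← integral_mul_const]
  refine setIntegral_congr_fun hmeas (fun x _ => ?_)
  have hρ : ∀ x, rhoPow α (t * x) = t ^ α * rhoPow α x := by
    intro x
    by_cases hx : 0 < x
    · simp [rhoPow, hx, ht, Real.mul_rpow ht.le hx.le]
    · simp [rhoPow, hx, ht]
  have h1 : rhoPow α t = t ^ α * rhoPow α 1 := by simpa using hρ 1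
  have h2 : |t - t * x| = t * |1 - x| := by
    rw [show t - t * x = t * (1 - x) by ring, abs_mul, abs_of_pos ht]
  have h3 : t ^ (α - 2 * s) = t * t ^ α / t ^ (1 + 2 * s) := by
    rw [mul_comm t, ← Real.rpow_add_one ht.ne', ← Real.rpow_sub ht]
    ring_nf
  simp only [hρ, h1, h2, h3, smul_eq_mul, abs_of_pos ht, Real.mul_rpow ht.le (abs_nonneg _)]
  rw [← mul_sub, mul_div_mul_comm]
  ring

/-- For `s ∈ (0,1)`, `α ∈ (0,2s)` and `t > 0`, the principal value
`lim_{ε→0⁺} ∫_{|r−t|>ε} (ρ_α(t) − ρ_α(r))/|t−r|^{1+2s} dr` exists and equals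
`q(s,α)·t^{α−2s}`. -/
theorem stmt3 (s α t : ℝ) (hs : s ∈ Set.Ioo (0:ℝ) 1) (hα : α ∈ Set.Ioo (0:ℝ) (2 * s))
    (ht : 0 < t) :
    Tendsto
      (fun ε : ℝ =>
        ∫ r in {r : ℝ | ε < |r - t|}, (rhoPow α t - rhoPow α r) / |t - r| ^ (1 + 2 * s))
      (𝓝[>] 0) (𝓝 (qfun s α * t ^ (α - 2 * s))) := by
  have hd : Tendsto (fun ε : ℝ => ε / t) (𝓝[>] 0) (𝓝[>] 0) := by
    refine tendsto_nhdsWithin_iff.2 ⟨?_, ?_⟩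
    · have : ContinuousAt (fun ε : ℝ => ε / t) 0 := by fun_prop
      simpa using this.tendsto.mono_left (nhdsWithin_le_nhds (s := Ioi 0))
    · filter_upwards [self_mem_nhdsWithin] with ε hε using div_pos hε ht
  simp only [truncated_integral_scale ht]
  exact ((tendsto_truncated_integral_one hs hα).comp hd).mul_const _
end

section
/- Let n ≥ 2, s ∈ (0,1), and let x = (x′, xₙ) ∈ ℝⁿ with xₙ > 0. Then ∫_{{y ∈ ℝⁿ : yₙ < 0}} |x − y|^{−(n+2s)} dy = A(n,s) · xₙ^{−2s} / (2s), and in particular the integral is finite. -/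
/-!
Substituting `w = x - y` turns the integral into that of `‖w‖ ^ (-(n + 2s))` over the half-space
`{w | x_n < w_n}`. Splitting off the last coordinate, Tonelli reduces this to the horizontal slices
`∫ (t² + ‖z‖²) ^ (-(n + 2s) / 2) dz` for `t > x_n`. The rescaling `z = t u` shows that a slice
equals `A(n,s) t ^ (-1 - 2s)` (`integral_slice`), and this is integrable over `(x_n, ∞)` with
integral `A(n,s) x_n ^ (-2s) / (2s)`. The slices are integrable since `n + 2s > n - 1`, which is the
Japanese bracket estimate in Mathlib.
-/

open MeasureTheory Filter Set Topology

/-- `A(n,s) = ∫_{ℝ^{n−1}} (1+|z|²)^{−(n+2s)/2} dz`, with `n = m+1`. -/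
noncomputable def Aconst (m : ℕ) (s : ℝ) : ℝ :=
  ∫ z : EuclideanSpace ℝ (Fin m), (1 + ‖z‖ ^ 2) ^ (-(((m : ℝ) + 1) + 2 * s) / 2)

/-- The splitting `ℝ^(m+1) ≃ ℝ × ℝ^m`, `w ↦ (w_last, (w_0, …, w_(m-1)))`. -/
noncomputable def splitLast (m : ℕ) :
    EuclideanSpace ℝ (Fin (m + 1)) ≃ᵐ ℝ × EuclideanSpace ℝ (Fin m) :=
  ((MeasurableEquiv.toLp 2 (Fin (m + 1) → ℝ)).symm.trans
    (MeasurableEquiv.piFinSuccAbove (fun _ => ℝ) (Fin.last m))).trans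
      (MeasurableEquiv.prodCongr (MeasurableEquiv.refl ℝ) (MeasurableEquiv.toLp 2 (Fin m → ℝ)))

lemma measurePreserving_splitLast (m : ℕ) : MeasurePreserving (splitLast m) := by
  have h1 := PiLp.volume_preserving_ofLp (Fin (m + 1))
  have h2 := volume_preserving_piFinSuccAbove (fun _ : Fin (m + 1) => ℝ) (Fin.last m)
  have h3 := (MeasurePreserving.id (volume : Measure ℝ)).prod
    (PiLp.volume_preserving_toLp (Fin m))
  exact h3.comp (h2.comp h1)

lemma splitLast_fst (m : ℕ) (w : EuclideanSpace ℝ (Fin (m + 1))) :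
    (splitLast m w).1 = w (Fin.last m) := rfl

lemma norm_sq_eq_splitLast (m : ℕ) (w : EuclideanSpace ℝ (Fin (m + 1))) :
    ‖w‖ ^ 2 = (splitLast m w).1 ^ 2 + ‖(splitLast m w).2‖ ^ 2 := by
  have h : ∀ i, (splitLast m w).2 i = w i.castSucc := fun i => by
    change w ((Fin.last m).succAbove i) = _
    rw [Fin.succAbove_last]
  rw [EuclideanSpace.norm_sq_eq, EuclideanSpace.norm_sq_eq, Fin.sum_univ_castSucc, splitLast_fst]
  simp only [h, Real.norm_eq_abs, sq_abs]
  ring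

/-- Homogeneity of the kernel under the rescaling `z = t u`. -/
lemma slice_smul {m : ℕ} {t : ℝ} (ht : 0 < t) (q : ℝ) (u : EuclideanSpace ℝ (Fin m)) :
    (t ^ 2 + ‖t • u‖ ^ 2) ^ (-q / 2) = t ^ (-q) * (1 + ‖u‖ ^ 2) ^ (-q / 2) := by
  have h : t ^ 2 + ‖t • u‖ ^ 2 = t ^ 2 * (1 + ‖u‖ ^ 2) := by
    rw [norm_smul, Real.norm_of_nonneg ht.le]; ring
  rw [h, Real.mul_rpow (by positivity) (by positivity), ← Real.rpow_natCast t 2,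
    ← Real.rpow_mul ht.le]
  congr 2
  push_cast
  ring

lemma integrable_slice {m : ℕ} {s t : ℝ} (hs : 0 < s) (ht : 0 < t) :
    Integrable (fun z : EuclideanSpace ℝ (Fin m) =>
      (t ^ 2 + ‖z‖ ^ 2) ^ (-(((m : ℝ) + 1) + 2 * s) / 2)) := by
  rw [← integrable_comp_smul_iff volume _ ht.ne']
  simp only [slice_smul ht]
  refine Integrable.const_mul ?_ _
  apply integrable_rpow_neg_one_add_norm_sq
  rw [finrank_euclideanSpace_fin]
  linarith

lemma integral_slice {m : ℕ} {s t : ℝ} (ht : 0 < t) :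
    ∫ z : EuclideanSpace ℝ (Fin m), (t ^ 2 + ‖z‖ ^ 2) ^ (-(((m : ℝ) + 1) + 2 * s) / 2)
      = Aconst m s * t ^ (-1 - 2 * s) := by
  have h := Measure.integral_comp_smul_of_nonneg (volume : Measure (EuclideanSpace ℝ (Fin m)))
    (fun z => (t ^ 2 + ‖z‖ ^ 2) ^ (-(((m : ℝ) + 1) + 2 * s) / 2)) t (hR := ht.le)
  simp only [slice_smul ht, integral_const_mul, finrank_euclideanSpace_fin, smul_eq_mul] at h
  rw [← Aconst, eq_inv_mul_iff_mul_eq₀ (by positivity)] at h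
  rw [← h, ← mul_assoc, ← Real.rpow_natCast t m, ← Real.rpow_add ht, mul_comm]
  congr 2
  ring

/-- The half-space integral in the coordinates `(t, z) ∈ (c, ∞) × ℝ^m`. -/
lemma halfSpace_prod {m : ℕ} {s c : ℝ} (hs : 0 < s) (hc : 0 < c) :
    IntegrableOn (fun p : ℝ × EuclideanSpace ℝ (Fin m) =>
      (p.1 ^ 2 + ‖p.2‖ ^ 2) ^ (-(((m : ℝ) + 1) + 2 * s) / 2)) (Ioi c ×ˢ univ) ∧
    ∫ p in (Ioi c ×ˢ univ : Set (ℝ × EuclideanSpace ℝ (Fin m))),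
      (p.1 ^ 2 + ‖p.2‖ ^ 2) ^ (-(((m : ℝ) + 1) + 2 * s) / 2)
      = Aconst m s * c ^ (-(2 * s)) / (2 * s) := by
  have hmeas : Measurable (fun p : ℝ × EuclideanSpace ℝ (Fin m) =>
      (p.1 ^ 2 + ‖p.2‖ ^ 2) ^ (-(((m : ℝ) + 1) + 2 * s) / 2)) := by fun_prop
  have hexp : -1 - 2 * s < -1 := by linarith
  have hint : IntegrableOn (fun p : ℝ × EuclideanSpace ℝ (Fin m) =>
      (p.1 ^ 2 + ‖p.2‖ ^ 2) ^ (-(((m : ℝ) + 1) + 2 * s) / 2)) (Ioi c ×ˢ univ) := by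
    rw [IntegrableOn, Measure.volume_eq_prod, ← Measure.prod_restrict, Measure.restrict_univ,
      integrable_prod_iff hmeas.aestronglyMeasurable]
    constructor
    · filter_upwards [ae_restrict_mem measurableSet_Ioi] with t ht
      exact integrable_slice hs (hc.trans ht)
    · refine (((integrableOn_Ioi_rpow_of_lt hexp hc).const_mul (Aconst m s))).congr ?_
      filter_upwards [ae_restrict_mem measurableSet_Ioi] with t ht
      rw [← integral_slice (hc.trans ht)]
      refine integral_congr_ae (Eventually.of_forall fun z => ?_)
      exact (Real.norm_of_nonneg (by positivity)).symm
  refine ⟨hint, ?_⟩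
  rw [Measure.volume_eq_prod] at hint ⊢
  rw [setIntegral_prod _ hint]
  simp only [setIntegral_univ]
  rw [setIntegral_congr_fun measurableSet_Ioi
    (fun t ht => integral_slice (m := m) (s := s) (hc.trans ht)),
    integral_const_mul, integral_Ioi_rpow_of_lt hexp hc,
    show -1 - 2 * s + 1 = -(2 * s) by ring, neg_div_neg_eq, mul_div_assoc]

/-- For `n = m+1 ≥ 2`, `s ∈ (0,1)` and `x ∈ ℝⁿ` with `xₙ > 0`, the integral of
`|x−y|^{−(n+2s)}` over the lower half-space `{yₙ < 0}` is finite and equals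
`A(n,s)·xₙ^{−2s}/(2s)`. -/
theorem stmt4 (m : ℕ) (hm : 1 ≤ m) (s : ℝ) (hs : s ∈ Set.Ioo (0:ℝ) 1)
    (x : EuclideanSpace ℝ (Fin (m + 1))) (hx : 0 < x (Fin.last m)) :
    IntegrableOn
      (fun y : EuclideanSpace ℝ (Fin (m + 1)) => ‖x - y‖ ^ (-(((m : ℝ) + 1) + 2 * s)))
      {y : EuclideanSpace ℝ (Fin (m + 1)) | y (Fin.last m) < 0} ∧
    (∫ y in {y : EuclideanSpace ℝ (Fin (m + 1)) | y (Fin.last m) < 0},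
        ‖x - y‖ ^ (-(((m : ℝ) + 1) + 2 * s)))
      = Aconst m s * (x (Fin.last m)) ^ (-(2 * s)) / (2 * s) := by
  have hmp : MeasurePreserving (fun y => splitLast m (x - y)) :=
    (measurePreserving_splitLast m).comp (Measure.measurePreserving_sub_left volume x)
  have hemb : MeasurableEmbedding (fun y => splitLast m (x - y)) :=
    (splitLast m).measurableEmbedding.comp (MeasurableEquiv.subLeft x).measurableEmbedding
  have hset : {y : EuclideanSpace ℝ (Fin (m + 1)) | y (Fin.last m) < 0}
      = (fun y => splitLast m (x - y)) ⁻¹' (Ioi (x (Fin.last m)) ×ˢ univ) := by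
    ext y
    simp only [mem_setOf_eq, mem_preimage, mem_prod, mem_Ioi, mem_univ, and_true, splitLast_fst,
      PiLp.sub_apply]
    constructor <;> intro h <;> linarith
  have hfun : (fun y : EuclideanSpace ℝ (Fin (m + 1)) => ‖x - y‖ ^ (-(((m : ℝ) + 1) + 2 * s)))
      = (fun p : ℝ × EuclideanSpace ℝ (Fin m) =>
          (p.1 ^ 2 + ‖p.2‖ ^ 2) ^ (-(((m : ℝ) + 1) + 2 * s) / 2)) ∘
        (fun y => splitLast m (x - y)) := by
    funext y
    simp only [Function.comp_apply]
    rw [← norm_sq_eq_splitLast, ← Real.rpow_natCast ‖x - y‖ 2, ← Real.rpow_mul (norm_nonneg _)]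
    congr 1
    push_cast
    ring
  obtain ⟨h1, h2⟩ := halfSpace_prod (m := m) hs.1 hx
  rw [hfun, hset, ← h2]
  exact ⟨(hmp.integrableOn_comp_preimage hemb).2 h1, hmp.setIntegral_preimage_emb hemb
    (fun p => (p.1 ^ 2 + ‖p.2‖ ^ 2) ^ (-(((m : ℝ) + 1) + 2 * s) / 2)) _⟩
end

section
/- Let n ≥ 1, γ > 0, α ∈ (0, γ), C₀ > 0. Let K : ℝⁿ \ {0} → ℝ be measurable and satisfy |K(x − y) − K(x)| ≤ C₀ |y|^γ / |x|^{n+γ} whenever |x| > 2|y|. Let u : ℝⁿ → ℝ be measurable with |u(y)| ≤ 1 + |y|^α for all y. Then there is a constant C, depending only on n, γ, α, C₀, such that for every x₀ ∈ ℝⁿ with |x₀| ≤ 1 and every r ∈ (0, 1]: for each x ∈ B_r(x₀) the integral ∫_{{|y − x₀| ≥ 2r}} (K(x − y) − K(x₀ − y)) u(y) dy is absolutely convergent, and ∫_{B_r(x₀)} | ∫_{{|y − x₀| ≥ 2r}} (K(x − y) − K(x₀ − y)) u(y) dy | dx ≤ C rⁿ. -/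
/-!
Put `z = x₀ - y` and `h = x₀ - x`, so that the kernel difference is `K (z - h) - K z` with
`‖h‖ < r` and `‖z‖ ≥ 2r`; the hypothesis on `K` bounds it by `C₀ r ^ γ / ‖z‖ ^ (n + γ)`.
Since `r ≤ 1` and `‖x₀‖ ≤ 1`, in the rescaled variable `w = (y - x₀) / r` the growth condition gives
`|u y| ≤ 2 (1 + ‖w‖) ^ α`, and `‖w‖ ≥ 2` allows `‖w‖` to be replaced by `1 + ‖w‖` in the
denominator. Hence the integrand is dominated by a constant times
`r ^ (-n) (1 + ‖w‖) ^ (-(n + γ - α))` (`integrand_bound`), which is integrable because `α < γ`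
and whose integral in `y` does not depend on `r` (`integral_rescale`). The inner integral is
therefore bounded uniformly in `x`, and integrating over `B_r(x₀)` produces the factor `r ^ n`.
-/

open MeasureTheory Filter Set Topology Metric

/-- The scaling inequality behind the domination: `ρ` stands for `‖y - x₀‖` and `s` for `‖y‖`. -/
lemma scaling_bound {n γ α r ρ s : ℝ} (hn : 0 ≤ n) (hγ : 0 < γ) (hα : 0 < α)
    (hr : 0 < r) (hr1 : r ≤ 1) (hρ : 2 * r ≤ ρ) (hs : 0 ≤ s) (hsρ : s ≤ 1 + ρ) :
    r ^ γ / ρ ^ (n + γ) * (1 + s ^ α)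
      ≤ 2 ^ (n + γ) * 2 * (r ^ (-n) * (1 + r⁻¹ * ρ) ^ (-(n + γ - α))) := by
  obtain ⟨t, rfl⟩ : ∃ t, ρ = r * t := ⟨r⁻¹ * ρ, by field_simp⟩
  have ht : 2 ≤ t := by nlinarith
  have e : r⁻¹ * (r * t) = t := by field_simp
  rw [e]
  have h1 : r ^ γ / (r * t) ^ (n + γ) = r ^ (-n) * t ^ (-(n + γ)) := by
    rw [Real.mul_rpow hr.le (by linarith), Real.rpow_neg (by linarith : 0 ≤ t), Real.rpow_neg hr.le,
      Real.rpow_add hr]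
    have := Real.rpow_pos_of_pos hr γ
    have := Real.rpow_pos_of_pos hr n
    have := Real.rpow_pos_of_pos (by linarith : 0 < t) (n + γ)
    field_simp
  have h2 : 1 + s ^ α ≤ 2 * (1 + t) ^ α := by
    have a : s ^ α ≤ (1 + t) ^ α := Real.rpow_le_rpow hs (by nlinarith) hα.le
    have b : 1 ≤ (1 + t) ^ α := Real.one_le_rpow (by linarith) hα.le
    linarith
  have h3 : t ^ (-(n + γ)) ≤ 2 ^ (n + γ) * (1 + t) ^ (-(n + γ)) := by
    have : t ^ (-(n + γ)) ≤ (2⁻¹ * (1 + t)) ^ (-(n + γ)) :=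
      Real.rpow_le_rpow_of_nonpos (by linarith) (by linarith) (by linarith)
    rwa [Real.mul_rpow (by norm_num) (by linarith), Real.inv_rpow (by norm_num),
      Real.rpow_neg (by norm_num : (0:ℝ) ≤ 2), inv_inv] at this
  have h4 : (1 + t) ^ (-(n + γ - α)) = (1 + t) ^ (-(n + γ)) * (1 + t) ^ α := by
    rw [← Real.rpow_add (by linarith)]; ring_nf
  rw [h1, h4]
  calc r ^ (-n) * t ^ (-(n + γ)) * (1 + s ^ α)
      ≤ r ^ (-n) * (2 ^ (n + γ) * (1 + t) ^ (-(n + γ))) * (2 * (1 + t) ^ α) := by gcongr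
    _ = _ := by ring

/-- Pointwise domination of the integrand on `{‖y - x₀‖ ≥ 2r}`, uniform in `x ∈ B_r(x₀)`. -/
lemma integrand_bound {n : ℕ} {γ α C₀ : ℝ} (hγ : 0 < γ) (hα : 0 < α) (hC₀ : 0 < C₀)
    {K u : EuclideanSpace ℝ (Fin n) → ℝ}
    (hK : ∀ x y : EuclideanSpace ℝ (Fin n), 2 * ‖y‖ < ‖x‖ →
      |K (x - y) - K x| ≤ C₀ * ‖y‖ ^ γ / ‖x‖ ^ ((n : ℝ) + γ))
    (hu : ∀ y, |u y| ≤ 1 + ‖y‖ ^ α) {x₀ x y : EuclideanSpace ℝ (Fin n)} (hx₀ : ‖x₀‖ ≤ 1)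
    {r : ℝ} (hr : 0 < r) (hr1 : r ≤ 1) (hx : x ∈ ball x₀ r) (hy : 2 * r ≤ ‖y - x₀‖) :
    ‖(K (x - y) - K (x₀ - y)) * u y‖
      ≤ C₀ * (2 ^ ((n : ℝ) + γ) * 2) *
        (r ^ (-(n : ℝ)) * (1 + ‖r⁻¹ • (y - x₀)‖) ^ (-((n : ℝ) + γ - α))) := by
  have hh : ‖x₀ - x‖ < r := by rwa [mem_ball', dist_eq_norm] at hx
  have hz : ‖x₀ - y‖ = ‖y - x₀‖ := norm_sub_rev _ _
  have k := hK (x₀ - y) (x₀ - x) (by rw [hz]; linarith)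
  rw [show x₀ - y - (x₀ - x) = x - y by abel, hz] at k
  have k2 : |K (x - y) - K (x₀ - y)| ≤ C₀ * r ^ γ / ‖y - x₀‖ ^ ((n : ℝ) + γ) := by
    refine k.trans ?_
    gcongr
  have hs : ‖y‖ ≤ 1 + ‖y - x₀‖ := by
    have := norm_add_le (y - x₀) x₀
    rw [sub_add_cancel] at this
    linarith
  have sb := scaling_bound (n := n) (Nat.cast_nonneg n) hγ hα hr hr1 hy (norm_nonneg y) hs
  rw [norm_mul, Real.norm_eq_abs, Real.norm_eq_abs, norm_smul, Real.norm_of_nonneg (by positivity)]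
  calc _ ≤ C₀ * r ^ γ / ‖y - x₀‖ ^ ((n : ℝ) + γ) * (1 + ‖y‖ ^ α) :=
        mul_le_mul k2 (hu y) (abs_nonneg _) (by positivity)
    _ = C₀ * (r ^ γ / ‖y - x₀‖ ^ ((n : ℝ) + γ) * (1 + ‖y‖ ^ α)) := by ring
    _ ≤ C₀ * (2 ^ ((n : ℝ) + γ) * 2 *
        (r ^ (-(n : ℝ)) * (1 + r⁻¹ * ‖y - x₀‖) ^ (-((n : ℝ) + γ - α)))) := by gcongr
    _ = _ := by ring

/-- The `L¹`-normalised dilation about `x₀` preserves the integral. -/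
lemma integral_rescale {n : ℕ} (g : EuclideanSpace ℝ (Fin n) → ℝ)
    (x₀ : EuclideanSpace ℝ (Fin n)) {r : ℝ} (hr : 0 < r) :
    ∫ y, r ^ (-(n : ℝ)) * g (r⁻¹ • (y - x₀)) = ∫ w, g w := by
  rw [integral_const_mul, integral_sub_right_eq_self (fun y => g (r⁻¹ • y)) x₀,
    Measure.integral_comp_inv_smul_of_nonneg _ _ hr.le, finrank_euclideanSpace_fin, smul_eq_mul,
    ← mul_assoc, Real.rpow_neg hr.le, Real.rpow_natCast,
    inv_mul_cancel₀ (pow_ne_zero _ hr.ne'), one_mul]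

/-- BMO-type estimate for a Calderón–Zygmund kernel satisfying the strengthened
Hörmander condition, applied to a function of slow polynomial growth: for
`0 < α < γ` there is `C = C(n,γ,α,C₀)` such that for every admissible `K`, `u`,
every centre `x₀` with `|x₀| ≤ 1` and radius `r ∈ (0,1]`, the integral
`∫_{|y−x₀|≥2r} (K(x−y) − K(x₀−y))u(y) dy` converges absolutely for `x ∈ B_r(x₀)` and
its average over `B_r(x₀)` of absolute values is at most `C rⁿ`. -/
theorem stmt9 (n : ℕ) (hn : 1 ≤ n) (γ α C₀ : ℝ) (hγ : 0 < γ)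
    (hα : α ∈ Set.Ioo (0:ℝ) γ) (hC₀ : 0 < C₀) :
    ∃ C : ℝ, 0 < C ∧
      ∀ K : EuclideanSpace ℝ (Fin n) → ℝ, Measurable K →
        (∀ x y : EuclideanSpace ℝ (Fin n), 2 * ‖y‖ < ‖x‖ →
          |K (x - y) - K x| ≤ C₀ * ‖y‖ ^ γ / ‖x‖ ^ ((n : ℝ) + γ)) →
      ∀ u : EuclideanSpace ℝ (Fin n) → ℝ, Measurable u →
        (∀ y, |u y| ≤ 1 + ‖y‖ ^ α) →
      ∀ x₀ : EuclideanSpace ℝ (Fin n), ‖x₀‖ ≤ 1 →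
      ∀ r : ℝ, r ∈ Set.Ioc (0:ℝ) 1 →
        (∀ x ∈ ball x₀ r,
          IntegrableOn (fun y => (K (x - y) - K (x₀ - y)) * u y)
            {y : EuclideanSpace ℝ (Fin n) | 2 * r ≤ ‖y - x₀‖}) ∧
        (∫ x in ball x₀ r,
            |∫ y in {y : EuclideanSpace ℝ (Fin n) | 2 * r ≤ ‖y - x₀‖},
              (K (x - y) - K (x₀ - y)) * u y|)
          ≤ C * r ^ (n : ℝ) := by
  obtain ⟨hα0, hαγ⟩ := hα
  set g : EuclideanSpace ℝ (Fin n) → ℝ := fun w => (1 + ‖w‖) ^ (-((n : ℝ) + γ - α)) with hg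
  have hgi : Integrable g := integrable_one_add_norm (by
    rw [finrank_euclideanSpace_fin]; linarith)
  have hg0 : 0 ≤ ∫ w, g w := integral_nonneg fun w => by positivity
  set A : ℝ := C₀ * (2 ^ ((n : ℝ) + γ) * 2) with hA
  set V : ℝ := volume.real (ball (0 : EuclideanSpace ℝ (Fin n)) 1) with hV
  have hM : 0 ≤ A * (∫ w, g w) * V := by positivity
  -- The summand `1` only serves to make the constant strictly positive.
  refine ⟨A * (∫ w, g w) * V + 1, by linarith, ?_⟩
  intro K hKm hK u hum hu x₀ hx₀ r ⟨hr, hr1⟩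
  set S : Set (EuclideanSpace ℝ (Fin n)) := {y | 2 * r ≤ ‖y - x₀‖} with hS
  have hSm : MeasurableSet S := measurableSet_le measurable_const (by fun_prop)
  set G : EuclideanSpace ℝ (Fin n) → ℝ :=
    fun y => A * (r ^ (-(n : ℝ)) * g (r⁻¹ • (y - x₀))) with hG
  have hGi : Integrable G :=
    (((hgi.comp_smul (inv_ne_zero hr.ne')).comp_sub_right x₀).const_mul _).const_mul _
  have hG0 : ∀ y, 0 ≤ G y := fun y => by positivity
  have hGint : ∫ y, G y = A * ∫ w, g w := by
    rw [hG, integral_const_mul, integral_rescale g x₀ hr]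
  have hbd : ∀ x ∈ ball x₀ r, ∀ᵐ y ∂(volume.restrict S),
      ‖(K (x - y) - K (x₀ - y)) * u y‖ ≤ G y := fun x hx =>
    (ae_restrict_iff' hSm).2 <| .of_forall fun y hy =>
      integrand_bound hγ hα0 hC₀ hK hu hx₀ hr hr1 hx hy
  refine ⟨fun x hx => ?_, ?_⟩
  · exact hGi.integrableOn.mono' (by fun_prop) (hbd x hx)
  · have hin : ∀ x ∈ ball x₀ r,
        ‖|∫ y in S, (K (x - y) - K (x₀ - y)) * u y|‖ ≤ A * ∫ w, g w := fun x hx => by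
      rw [norm_abs_eq_norm, ← hGint]
      exact (norm_integral_le_of_norm_le hGi.integrableOn (hbd x hx)).trans
        (setIntegral_le_integral hGi (.of_forall hG0))
    have hvol : volume.real (ball x₀ r) = r ^ (n : ℝ) * V := by
      rw [hV, measureReal_def, measureReal_def, Measure.addHaar_ball_of_pos _ _ hr,
        finrank_euclideanSpace_fin, ENNReal.toReal_mul, ENNReal.toReal_ofReal (by positivity),
        Real.rpow_natCast]
    have h := norm_setIntegral_le_of_norm_le_const (μ := volume) measure_ball_lt_top hin
    rw [hvol] at h
    have hrn : 0 ≤ r ^ (n : ℝ) := by positivity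
    calc _ ≤ _ := le_abs_self _
      _ ≤ A * (∫ w, g w) * (r ^ (n : ℝ) * V) := h
      _ ≤ (A * (∫ w, g w) * V + 1) * r ^ (n : ℝ) := by linarith
end
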